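/- Let b > 0, let q : ℝ → ℂ be continuous on [−b,b], let f solve f'' − q f = 0 on [−b,b] with f(0) = 1, f'(0) = 0, and assume f(x) ≠ 0 on [−b,b]. For ω ∈ ℂ let u(ω,·) be the solution of y'' − q(x)y = −ω² y with y(0) = 1, y'(0) = iω, and for N ∈ ℕ define the truncation u_N(ω,x) = e^{iωx} + Σ_{n=0}^{N} β_n(x) ∫_{−1}^{1} P_n(y) e^{iωxy} dy. Then there exist functions ε_N : (0,b] → [0,∞) with ε_N(x) → 0 as N → ∞ for every x ∈ (0,b], such that for all ω ∈ ℝ, all N ∈ ℕ und all x ∈ (0,b], |u(ω,x) − u_N(ω,x)| ≤ ε_N(x)·√(2x); in particular the error bound is independent of ω ∈ ℝ. -/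

import Mathlib

open MeasureTheory Set Filter Finset Complex Topology

noncomputable section

/-- The iterated integrals X⁽ⁿ⁾: X⁽⁰⁾ ≡ 1, X⁽ⁿ⁾(x) = n ∫₀ˣ X⁽ⁿ⁻¹⁾(s) (f(s)²)^((−1)ⁿ) ds. -/
def formalX (f : ℝ → ℂ) : ℕ → ℝ → ℂ
  | 0 => fun _ => 1
  | n + 1 => fun x =>
      (n + 1 : ℂ) * ∫ s in (0:ℝ)..x, formalX f n s * ((f s) ^ 2) ^ ((-1 : ℤ) ^ (n + 1))

/-- The iterated integrals X̃⁽ⁿ⁾: X̃⁽⁰⁾ ≡ 1, X̃⁽ⁿ⁾(x) = n ∫₀ˣ X̃⁽ⁿ⁻¹⁾(s) (f(s)²)^((−1)^(n−1)) ds. -/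
def formalXt (f : ℝ → ℂ) : ℕ → ℝ → ℂ
  | 0 => fun _ => 1
  | n + 1 => fun x =>
      (n + 1 : ℂ) * ∫ s in (0:ℝ)..x, formalXt f n s * ((f s) ^ 2) ^ ((-1 : ℤ) ^ n)

/-- The formal powers φₖ: φₖ = f·X⁽ᵏ⁾ for odd k, φₖ = f·X̃⁽ᵏ⁾ for even k. -/
def formalPower (f : ℝ → ℂ) (k : ℕ) (x : ℝ) : ℂ :=
  if Odd k then f x * formalX f k x else f x * formalXt f k x

/-- The Legendre polynomial Pₙ via Rodrigues' formula. -/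
def legendreP (n : ℕ) : Polynomial ℝ :=
  ((1 : ℝ) / (2 ^ n * n.factorial)) • Polynomial.derivative^[n] ((Polynomial.X ^ 2 - 1) ^ n)

/-- βₙ(x) = ((2n+1)/2)·(Σₖ l_{k,n} φₖ(x)/xᵏ − 1), where l_{k,n} is the coefficient of xᵏ in Pₙ. -/
def betaCoef (f : ℝ → ℂ) (n : ℕ) (x : ℝ) : ℂ :=
  ((2 * n + 1 : ℂ) / 2) *
    ((∑ k ∈ Finset.range (n + 1), ((legendreP n).coeff k : ℂ) * formalPower f k x / (x : ℂ) ^ k) - 1)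

lemma hilb_aux {H : Type*} [NormedAddCommGroup H] [InnerProductSpace ℂ H] [CompleteSpace H]
    (v : ℕ → H) (hv : Orthonormal ℂ v) (c : ℕ → ℂ) (C : ℝ) (hC : 0 ≤ C)
    (hc : ∀ (d : ℕ) (a : ℕ → ℂ), ‖∑ n ∈ Finset.range d, a n * c n‖ ≤ C * ‖∑ n ∈ Finset.range d, a n • v n‖) :
    ∃ ε : ℕ → ℝ, (∀ N, 0 ≤ ε N) ∧ Tendsto ε atTop (𝓝 0) ∧ ∀ (e : H) (m : ℂ),
      (∀ δ > 0, ∃ (d : ℕ) (a : ℕ → ℂ), ‖e - ∑ n ∈ Finset.range d, a n • v n‖ ≤ δ ∧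
        ‖m - ∑ n ∈ Finset.range d, a n * c n‖ ≤ C * δ) →
      ∀ N, ‖m - ∑ n ∈ Finset.range N, c n * inner ℂ (v n) e‖ ≤ ε N * ‖e‖ := by
  have hnorm : ∀ d, ‖∑ n ∈ Finset.range d, (starRingEnd ℂ (c n)) • v n‖ ^ 2
      = ∑ n ∈ Finset.range d, ‖c n‖ ^ 2 := by
    intro d
    have h1 := hv.inner_sum (fun n => starRingEnd ℂ (c n)) (fun n => starRingEnd ℂ (c n)) (Finset.range d)
    rw [inner_self_eq_norm_sq_to_K] at h1
    have h2 : ∑ n ∈ Finset.range d, starRingEnd ℂ (starRingEnd ℂ (c n)) * starRingEnd ℂ (c n)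
          = ((∑ n ∈ Finset.range d, ‖c n‖ ^ 2 : ℝ) : ℂ) := by
      push_cast
      refine Finset.sum_congr rfl fun n _ => ?_
      rw [Complex.conj_mul', Complex.norm_conj]
    rw [h2] at h1
    apply Complex.ofReal_injective
    rw [← h1]
    push_cast
    rfl
  have hS : ∀ d, ∑ n ∈ Finset.range d, ‖c n‖ ^ 2 ≤ C ^ 2 := by
    intro d
    have h1 := hc d (fun n => starRingEnd ℂ (c n))
    have h2 : ‖∑ n ∈ Finset.range d, (starRingEnd ℂ (c n)) * c n‖ = ∑ n ∈ Finset.range d, ‖c n‖ ^ 2 := by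
      have : ∑ n ∈ Finset.range d, (starRingEnd ℂ (c n)) * c n
          = ((∑ n ∈ Finset.range d, ‖c n‖ ^ 2 : ℝ) : ℂ) := by
        push_cast
        refine Finset.sum_congr rfl fun n _ => ?_
        rw [Complex.conj_mul']
      rw [this, Complex.norm_real, Real.norm_of_nonneg (by positivity)]
    rw [h2, ← hnorm d] at h1
    rw [← hnorm d]
    nlinarith [norm_nonneg (∑ n ∈ Finset.range d, (starRingEnd ℂ (c n)) • v n)]
  have hsum : Summable fun n => ‖c n‖ ^ 2 :=
    summable_of_sum_range_le (fun n => by positivity) hS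
  have hsumv : Summable fun n => (starRingEnd ℂ (c n)) • v n := by
    have := (hv.orthogonalFamily.summable_iff_norm_sq_summable (fun n => starRingEnd ℂ (c n))).2 (by simpa using hsum)
    simpa using this
  obtain ⟨K, hK⟩ := hsumv
  have hKv : ∀ n, inner ℂ K (v n) = c n := by
    intro n
    have h1 : HasSum (fun k => inner ℂ (v n) ((starRingEnd ℂ (c k)) • v k)) (inner ℂ (v n) K) :=
      hK.mapL (innerSL ℂ (v n))
    have h2 : HasSum (fun k => inner ℂ (v n) ((starRingEnd ℂ (c k)) • v k)) (starRingEnd ℂ (c n)) := by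
      have : (fun k => inner ℂ (v n) ((starRingEnd ℂ (c k)) • v k)) = fun k => if k = n then starRingEnd ℂ (c n) else 0 := by
        funext k
        rw [inner_smul_right, orthonormal_iff_ite.1 hv]
        by_cases h : k = n
        · simp [h]
        · simp [h, Ne.symm h]
      rw [this]
      exact hasSum_ite_eq n _
    rw [← inner_conj_symm, h1.unique h2]
    simp
  refine ⟨fun N => ‖K - ∑ n ∈ Finset.range N, (starRingEnd ℂ (c n)) • v n‖, fun N => norm_nonneg _, ?_, ?_⟩
  · have := (hK.tendsto_sum_nat.const_sub K).norm
    simpa using this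
  · intro e m h N
    have hm : m = inner ℂ K e := by
      by_contra hne
      have hpos : 0 < ‖m - inner ℂ K e‖ := by
        rw [norm_pos_iff]; exact sub_ne_zero.2 hne
      set t := ‖m - inner ℂ K e‖
      obtain ⟨d, a, h1, h2⟩ := h (t / (2 * (C + ‖K‖ + 1))) (by positivity)
      set δ := t / (2 * (C + ‖K‖ + 1)) with hδ
      have h3 : m - inner ℂ K e = (m - ∑ n ∈ Finset.range d, a n * c n)
          - inner ℂ K (e - ∑ n ∈ Finset.range d, a n • v n) := by
        rw [inner_sub_right, inner_sum]
        simp only [inner_smul_right, hKv]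
        ring
      have h4 : t ≤ C * δ + ‖K‖ * δ := by
        calc t = ‖(m - ∑ n ∈ Finset.range d, a n * c n)
              - inner ℂ K (e - ∑ n ∈ Finset.range d, a n • v n)‖ := by rw [← h3]
          _ ≤ _ := norm_sub_le _ _
          _ ≤ _ := add_le_add h2 ((norm_inner_le_norm _ _).trans (by gcongr))
      have h5 : t = δ * (2 * (C + ‖K‖ + 1)) := by
        rw [hδ]; field_simp
      have : 0 < δ := by positivity
      nlinarith [norm_nonneg K]
    have : m - ∑ n ∈ Finset.range N, c n * inner ℂ (v n) e
       = inner ℂ (K - ∑ n ∈ Finset.range N, (starRingEnd ℂ (c n)) • v n) e := by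
      rw [inner_sub_left, sum_inner, hm]
      simp [inner_smul_left]
    rw [this]
    exact norm_inner_le_norm _ _

lemma leg_eval_one (n : ℕ) : (legendreP n).eval 1 = 1 := by
  have h := Polynomial.aeval_iterate_derivative_self (((Polynomial.X ^ 2 - 1) ^ n : Polynomial ℝ)) n (1:ℝ)
    (p' := (Polynomial.X + 1) ^ n) (by
      simp only [Algebra.algebraMap_self, Polynomial.map_id, map_one]
      rw [← mul_pow]; congr 1; ring)
  rw [Polynomial.coe_aeval_eq_eval] at h
  rw [legendreP, Polynomial.eval_smul, h]
  have : (n.factorial : ℝ) ≠ 0 := by positivity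
  simp
  norm_num
  field_simp

lemma leg_eval_neg_one (n : ℕ) : ((legendreP n).eval (-1)) ^ 2 = 1 := by
  have h := Polynomial.aeval_iterate_derivative_self (((Polynomial.X ^ 2 - 1) ^ n : Polynomial ℝ)) n (-1:ℝ)
    (p' := (Polynomial.X - 1) ^ n) (by
      simp only [Algebra.algebraMap_self, Polynomial.map_id, map_one, map_neg]
      rw [← mul_pow]; congr 1; ring)
  rw [Polynomial.coe_aeval_eq_eval] at h
  rw [legendreP, Polynomial.eval_smul, h]
  have : (n.factorial : ℝ) ≠ 0 := by positivity
  have h2 : ((-2:ℝ) ^ n) ^ 2 = (2 ^ n) ^ 2 := by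
    rw [← pow_mul, mul_comm, pow_mul, ← pow_mul (2:ℝ), mul_comm n 2, pow_mul]; norm_num
  have h3 : (-1 - 1 : ℝ) = -2 := by norm_num
  simp only [nsmul_eq_mul, smul_eq_mul, Polynomial.eval_pow, Polynomial.eval_sub, Polynomial.eval_X, Polynomial.eval_one, h3]
  rw [mul_pow, mul_pow, h2]
  field_simp

lemma leg_natDegree_w (n : ℕ) : ((Polynomial.X ^ 2 - 1 : Polynomial ℝ) ^ n).natDegree = 2 * n := by
  have : (Polynomial.X ^ 2 - 1 : Polynomial ℝ) = Polynomial.X ^ 2 - Polynomial.C 1 := by simp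
  rw [Polynomial.natDegree_pow, this, Polynomial.natDegree_X_pow_sub_C]; ring

lemma leg_coeff_gt (n m : ℕ) (h : n < m) : (legendreP n).coeff m = 0 := by
  rw [legendreP, Polynomial.coeff_smul, Polynomial.coeff_iterate_derivative,
    Polynomial.coeff_eq_zero_of_natDegree_lt (n := m + n) (by rw [leg_natDegree_w]; omega)]
  simp

lemma leg_coeff_self (n : ℕ) : (legendreP n).coeff n ≠ 0 := by
  have hm : ((Polynomial.X ^ 2 - 1 : Polynomial ℝ) ^ n).Monic := by
    have : (Polynomial.X ^ 2 - 1 : Polynomial ℝ) = Polynomial.X ^ 2 - Polynomial.C 1 := by simp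
    rw [this]
    exact (Polynomial.monic_X_pow_sub_C (1:ℝ) (by norm_num)).pow n
  have h1 : ((Polynomial.X ^ 2 - 1 : Polynomial ℝ) ^ n).coeff (n + n) = 1 := by
    have := hm.coeff_natDegree
    rwa [leg_natDegree_w, two_mul] at this
  rw [legendreP, Polynomial.coeff_smul, Polynomial.coeff_iterate_derivative, h1]
  have h2 : (n + n).descFactorial n ≠ 0 := by
    rw [Ne, Nat.descFactorial_eq_zero_iff_lt]; omega
  have : (n.factorial : ℝ) ≠ 0 := by positivity
  simp [h2, this]

lemma leg_ibp (p g : Polynomial ℝ) (h1 : p.eval 1 = 0) (h2 : p.eval (-1) = 0) :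
    ∫ s in (-1:ℝ)..1, (Polynomial.derivative p).eval s * g.eval s
      = - ∫ s in (-1:ℝ)..1, p.eval s * (Polynomial.derivative g).eval s := by
  have := intervalIntegral.integral_mul_deriv_eq_deriv_mul (a := -1) (b := 1)
    (u := fun s => g.eval s) (v := fun s => p.eval s) (u' := fun s => (Polynomial.derivative g).eval s)
    (v' := fun s => (Polynomial.derivative p).eval s)
    (fun x _ => g.hasDerivAt x) (fun x _ => p.hasDerivAt x)
    ((Polynomial.continuous _).intervalIntegrable _ _) ((Polynomial.continuous _).intervalIntegrable _ _)
  simp only [h1, h2, mul_zero, sub_zero, zero_sub] at this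
  simp only [mul_comm (Polynomial.eval _ (Polynomial.derivative p))]
  rw [this]
  simp only [mul_comm]

lemma leg_orth_aux (n : ℕ) : ∀ k ≤ n, ∀ g : Polynomial ℝ, Polynomial.derivative^[k] g = 0 →
    ∫ s in (-1:ℝ)..1, (Polynomial.derivative^[k] ((Polynomial.X ^ 2 - 1) ^ n)).eval s * g.eval s = 0 := by
  intro k
  induction k with
  | zero => intro _ g hg; simp at hg; simp [hg]
  | succ k ih =>
    intro hk g hg
    have hd : (Polynomial.X ^ 2 - 1 : Polynomial ℝ) ∣ Polynomial.derivative^[k] ((Polynomial.X ^ 2 - 1) ^ n) := by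
      have := Polynomial.pow_sub_dvd_iterate_derivative_of_pow_dvd k
        (dvd_refl ((Polynomial.X ^ 2 - 1 : Polynomial ℝ) ^ n))
      exact (dvd_pow_self _ (by omega)).trans this
    obtain ⟨r, hr⟩ := hd
    simp only [Function.iterate_succ_apply']
    rw [leg_ibp _ _ (by rw [hr]; simp) (by rw [hr]; simp), ih (by omega), neg_zero]
    rwa [← Function.iterate_succ_apply]

lemma leg_orth_lower (n : ℕ) (g : Polynomial ℝ) (hg : Polynomial.derivative^[n] g = 0) :
    ∫ s in (-1:ℝ)..1, (legendreP n).eval s * g.eval s = 0 := by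
  simp only [legendreP, Polynomial.eval_smul, smul_eq_mul, mul_assoc]
  rw [intervalIntegral.integral_const_mul, leg_orth_aux n n le_rfl g hg, mul_zero]

lemma leg_natDegree_le (n : ℕ) : (legendreP n).natDegree ≤ n :=
  Polynomial.natDegree_le_iff_coeff_eq_zero.2 fun m hm => leg_coeff_gt n m hm

lemma leg_orth (n m : ℕ) (h : n ≠ m) :
    ∫ s in (-1:ℝ)..1, (legendreP n).eval s * (legendreP m).eval s = 0 := by
  rcases lt_or_gt_of_ne h with h | h
  · simp only [mul_comm (Polynomial.eval _ (legendreP n))]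
    exact leg_orth_lower _ _ (Polynomial.iterate_derivative_eq_zero ((leg_natDegree_le n).trans_lt h))
  · exact leg_orth_lower _ _ (Polynomial.iterate_derivative_eq_zero ((leg_natDegree_le m).trans_lt h))

lemma leg_norm (n : ℕ) :
    ∫ s in (-1:ℝ)..1, (legendreP n).eval s * (legendreP n).eval s = 2 / (2 * n + 1) := by
  set P := legendreP n with hP
  set r : Polynomial ℝ := Polynomial.X * Polynomial.derivative P - Polynomial.C (n:ℝ) * P with hr
  have hr0 : Polynomial.derivative^[n] r = 0 := by
    ext m
    rw [Polynomial.coeff_iterate_derivative]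
    have : r.coeff (m + n) = 0 := by
      have h1 : (Polynomial.X * Polynomial.derivative P).coeff (m+n) = (m+n : ℕ) * P.coeff (m + n) := by
        rcases h : m + n with _ | j
        · simp
        · rw [Polynomial.coeff_X_mul, Polynomial.coeff_derivative]; push_cast; ring
      rw [hr, Polynomial.coeff_sub, h1, Polynomial.coeff_C_mul]
      rcases Nat.eq_zero_or_pos m with rfl | hm
      · simp
      · rw [hP, leg_coeff_gt n (m+n) (by omega)]; simp
    rw [this]; simp
  have h1 := leg_orth_lower n r hr0
  have h2 : ∫ s in (-1:ℝ)..1, (Polynomial.derivative (Polynomial.X * P * P)).eval s = 2 := by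
    rw [intervalIntegral.integral_eq_sub_of_hasDerivAt
      (f := fun s => (Polynomial.X * P * P).eval s) (fun x _ => Polynomial.hasDerivAt _ x)
      ((Polynomial.continuous _).intervalIntegrable _ _)]
    have := leg_eval_neg_one n
    have h3 := leg_eval_one n
    rw [← hP] at this h3
    simp [h3]
    linarith
  have h3 : ∀ s : ℝ, (Polynomial.derivative (Polynomial.X * P * P)).eval s
     = (2 * n + 1) * (P.eval s * P.eval s) + 2 * (P.eval s * r.eval s) := by
    intro s
    simp [hr]
    ring
  simp only [h3] at h2
  rw [intervalIntegral.integral_add, intervalIntegral.integral_const_mul, intervalIntegral.integral_const_mul, h1] at h2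
  · rw [eq_div_iff (by positivity)]
    linarith
  · exact Continuous.intervalIntegrable (by fun_prop) _ _
  · exact Continuous.intervalIntegrable (by fun_prop) _ _

lemma leg_span (d : ℕ) : ∀ p : Polynomial ℂ, p.natDegree < d → ∃ a : ℕ → ℂ,
    p = ∑ n ∈ Finset.range d, a n • (legendreP n).map (algebraMap ℝ ℂ) := by
  induction d with
  | zero => intro p hp; omega
  | succ d ih =>
    intro p hp
    set Q := (legendreP d).map (algebraMap ℝ ℂ) with hQ
    have hQd : Q.coeff d ≠ 0 := by
      rw [hQ, Polynomial.coeff_map]; simpa using leg_coeff_self d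
    set p' := p - (p.coeff d / Q.coeff d) • Q with hp'
    have hc : ∀ m, d ≤ m → p'.coeff m = 0 := by
      intro m hm
      rcases hm.eq_or_lt with rfl | hm
      · simp [hp', hQd]
      · rw [hp', Polynomial.coeff_sub, Polynomial.coeff_eq_zero_of_natDegree_lt (p := p) (by omega),
          Polynomial.coeff_smul]
        have : Q.coeff m = 0 := by rw [hQ, Polynomial.coeff_map, leg_coeff_gt _ _ hm]; simp
        rw [this]; simp
    rcases Nat.eq_zero_or_pos d with h0 | h0
    · refine ⟨fun _ => p.coeff d / Q.coeff d, ?_⟩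
      have : p' = 0 := by ext m; simpa using hc m (by omega)
      subst h0
      simp only [zero_add, Finset.sum_range_one]
      exact sub_eq_zero.1 this
    · obtain ⟨a, ha⟩ := ih p' (by
        have : p'.natDegree ≤ d - 1 := Polynomial.natDegree_le_iff_coeff_eq_zero.2 fun m hm => hc m (by omega)
        omega)
      refine ⟨fun n => if n < d then a n else p.coeff d / Q.coeff d, ?_⟩
      rw [Finset.sum_range_succ]
      have : ∑ n ∈ Finset.range d, (if n < d then a n else p.coeff d / Q.coeff d) • (legendreP n).map (algebraMap ℝ ℂ)
        = p' := by
        rw [ha]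
        refine Finset.sum_congr rfl fun n hn => ?_
        rw [if_pos (Finset.mem_range.1 hn)]
      rw [this, hp']
      simp [← hQ]

def WSol (b : ℝ) (q : ℝ → ℂ) (G : ℝ → ℂ) (W : ℝ → ℝ → ℂ) : Prop :=
  Continuous G ∧ ContinuousOn (fun z : ℝ × ℝ => W z.1 z.2) (Set.Icc 0 b ×ˢ Set.univ) ∧
  ∀ s ∈ Set.Icc 0 b, ∀ t : ℝ, ∃ Φ : ℝ → ℂ, ContinuousOn Φ (Set.Icc 0 s) ∧ Φ 0 = G (s + t) ∧
    Φ s = W s t ∧ ∀ r ∈ Set.Ico 0 s,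
      HasDerivAt Φ (1 / 2 * q r * ∫ τ in (t - (s - r))..(t + (s - r)), W r τ) r

lemma WSol.cont {b : ℝ} {q G : ℝ → ℂ} {W : ℝ → ℝ → ℂ} (h : WSol b q G W) {r : ℝ}
    (hr : r ∈ Set.Icc 0 b) : Continuous (W r) := by
  rw [← continuousOn_univ]
  exact h.2.1.comp (f := fun τ : ℝ => (r, τ)) (by fun_prop) (fun τ _ => ⟨hr, Set.mem_univ _⟩)

lemma WSol.sub {b : ℝ} {q G G' : ℝ → ℂ} {W W' : ℝ → ℝ → ℂ} (h : WSol b q G W) (h' : WSol b q G' W') :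
    WSol b q (fun t => G t - G' t) (fun s t => W s t - W' s t) := by
  refine ⟨h.1.sub h'.1, h.2.1.sub h'.2.1, ?_⟩
  intro s hs t
  obtain ⟨Φ, h1, h2, h3, h4⟩ := h.2.2 s hs t
  obtain ⟨Ψ, k1, k2, k3, k4⟩ := h'.2.2 s hs t
  refine ⟨fun r => Φ r - Ψ r, h1.sub k1, by simp [h2, k2], by simp [h3, k3], ?_⟩
  intro r hr
  have hrb : r ∈ Set.Icc 0 b := ⟨hr.1, hr.2.le.trans hs.2⟩
  rw [intervalIntegral.integral_sub ((h.cont hrb).intervalIntegrable _ _)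
    ((h'.cont hrb).intervalIntegrable _ _), mul_sub]
  exact (h4 r hr).sub (k4 r hr)

lemma WSol.estimate (b : ℝ) (q : ℝ → ℂ) (Q : ℝ) (hQ0 : 0 ≤ Q) (hQ : ∀ r ∈ Set.Icc 0 b, ‖q r‖ ≤ Q)
    (X : ℝ) (hX : X ∈ Set.Ioc 0 b) (G : ℝ → ℂ) (W : ℝ → ℝ → ℂ) (h : WSol b q G W) :
    ‖W X 0 - G X‖ ≤ (Real.exp ((2 * Q * X + 1) * X) * (Q * X)) * ∫ t in (-X)..X, ‖G t‖ := by
  obtain ⟨hX0, hXb⟩ := hX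
  set lam := 2 * Q * X + 1 with hlam
  have hlam0 : 0 < lam := by positivity
  set L := ∫ t in (-X)..X, ‖G t‖ with hL
  have hL0 : 0 ≤ L := intervalIntegral.integral_nonneg (by linarith) (fun _ _ => norm_nonneg _)
  set tri : Set (ℝ × ℝ) := {z | 0 ≤ z.1 ∧ z.1 ≤ X ∧ |z.2| ≤ X - z.1} with htri
  have hcomp : IsCompact tri := by
    refine (isCompact_Icc.prod isCompact_Icc : IsCompact (Set.Icc 0 X ×ˢ Set.Icc (-X) X)).of_isClosed_subset ?_ ?_
    · exact (isClosed_le continuous_const continuous_fst).inter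
        ((isClosed_le continuous_fst continuous_const).inter
          (isClosed_le continuous_snd.abs (continuous_const.sub continuous_fst)))
    · rintro ⟨s, t⟩ ⟨h1, h2, h3⟩
      simp only at h1 h2 h3
      have := abs_le.1 h3
      exact ⟨⟨h1, h2⟩, ⟨by simp only; linarith, by simp only; linarith⟩⟩
  have hsub : tri ⊆ Set.Icc 0 b ×ˢ Set.univ := by
    rintro ⟨s, t⟩ ⟨h1, h2, h3⟩
    exact ⟨⟨h1, h2.trans hXb⟩, Set.mem_univ _⟩
  have hG := h.1
  obtain ⟨⟨s, t⟩, hst, hmax⟩ := hcomp.exists_isMaxOn (⟨(X, 0), by simp [htri, hX0.le]⟩ : tri.Nonempty)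
    (f := fun z : ℝ × ℝ => Real.exp (-lam * z.1) * ‖W z.1 z.2 - G (z.1 + z.2)‖)
    (ContinuousOn.mul (by fun_prop) ((h.2.1.mono hsub).sub (by fun_prop)).norm)
  set m := Real.exp (-lam * s) * ‖W s t - G (s + t)‖ with hm
  have hm0 : 0 ≤ m := by positivity
  have hle : ∀ r τ, 0 ≤ r → r ≤ X → |τ| ≤ X - r → ‖W r τ - G (r + τ)‖ ≤ Real.exp (lam * r) * m := by
    intro r τ h1 h2 h3
    have := hmax (show (r, τ) ∈ tri from ⟨h1, h2, h3⟩)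
    simp only [Set.mem_ofPred_eq] at this
    rw [← hm] at this
    calc _ = Real.exp (lam * r) * (Real.exp (-lam * r) * ‖W r τ - G (r + τ)‖) := by
            rw [← mul_assoc, ← Real.exp_add]; simp
      _ ≤ _ := by gcongr
  obtain ⟨hs0, hsX, htX⟩ := hst
  simp only at hs0 hsX htX
  obtain ⟨ht1, ht2⟩ := abs_le.1 htX
  obtain ⟨Φ, h1, h2, h3, h4⟩ := h.2.2 s ⟨hs0, hsX.trans hXb⟩ t
  have hder : ∀ r ∈ Set.Ico 0 s, ‖1 / 2 * q r * ∫ τ in (t - (s - r))..(t + (s - r)), W r τ‖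
      ≤ 1 / 2 * Q * (L + 2 * X * m * Real.exp (lam * r)) := by
    intro r hr
    obtain ⟨hr0, hrs⟩ := hr
    have hi : ‖∫ τ in (t - (s - r))..(t + (s - r)), W r τ‖ ≤
        ∫ τ in (t - (s - r))..(t + (s - r)), (‖G (r + τ)‖ + Real.exp (lam * r) * m) := by
      refine intervalIntegral.norm_integral_le_of_norm_le (by linarith) ?_
        (Continuous.intervalIntegrable (by fun_prop) _ _)
      refine Filter.Eventually.of_forall fun τ hτ => ?_
      have := hle r τ hr0 (by linarith) (abs_le.2 ⟨by linarith [hτ.1], by linarith [hτ.2]⟩)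
      calc ‖W r τ‖ = ‖G (r + τ) + (W r τ - G (r + τ))‖ := by congr 1; ring
        _ ≤ _ := (norm_add_le _ _).trans (by gcongr)
    have hi2 : ∫ τ in (t - (s - r))..(t + (s - r)), (‖G (r + τ)‖ + Real.exp (lam * r) * m)
        ≤ L + 2 * X * m * Real.exp (lam * r) := by
      rw [intervalIntegral.integral_add (Continuous.intervalIntegrable (by fun_prop) _ _)
        (Continuous.intervalIntegrable (by fun_prop) _ _), intervalIntegral.integral_const,
        intervalIntegral.integral_comp_add_left (fun τ => ‖G τ‖)]
      refine add_le_add ?_ ?_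
      · refine intervalIntegral.integral_mono_interval (by linarith) (by linarith) (by linarith)
          (Filter.Eventually.of_forall fun _ => norm_nonneg _) (Continuous.intervalIntegrable (by fun_prop) _ _)
      · rw [smul_eq_mul]
        have : t + (s - r) - (t - (s - r)) ≤ 2 * X := by linarith
        calc _ ≤ (2 * X) * (Real.exp (lam * r) * m) := by gcongr
          _ = _ := by ring
    rw [norm_mul, norm_mul]
    have : ‖(1 / 2 : ℂ)‖ = 1 / 2 := by simp
    rw [this]
    have hq := hQ r ⟨hr0, by linarith⟩
    gcongr
    exact hi.trans hi2
  have key := image_norm_le_of_norm_deriv_right_le_deriv_boundary (f := fun r => Φ r - Φ 0) (a := 0) (b := s)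
    (f' := fun r => 1 / 2 * q r * ∫ τ in (t - (s - r))..(t + (s - r)), W r τ)
    (h1.sub continuousOn_const) (fun r hr => ((h4 r hr).sub_const (Φ 0)).hasDerivWithinAt)
    (B := fun r => 1 / 2 * Q * (L * r + 2 * X * m * ((Real.exp (lam * r) - 1) / lam)))
    (B' := fun r => 1 / 2 * Q * (L + 2 * X * m * Real.exp (lam * r)))
    (by simp)
    (fun r => by
      have e1 : HasDerivAt (fun r => Real.exp (lam * r)) (Real.exp (lam * r) * (lam * 1)) r :=
        ((hasDerivAt_id r).const_mul lam).exp
      have e2 := ((((hasDerivAt_id r).const_mul L).add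
        (((e1.sub_const 1).div_const lam).const_mul (2 * X * m)))).const_mul (1 / 2 * Q)
      exact e2.congr_deriv (by field_simp))
    hder (x := s) ⟨hs0, le_rfl⟩
  simp only [h2, h3] at key
  have hfin : m ≤ Q * X * L := by
    have e0 : Real.exp (-lam * s) ≤ 1 := Real.exp_le_one_iff.2 (by nlinarith)
    have e1 : Real.exp (-lam * s) * Real.exp (lam * s) = 1 := by rw [← Real.exp_add]; simp
    have e2 : m ≤ 1 / 2 * Q * (L * X) + Q * X * m / lam := by
      calc m ≤ Real.exp (-lam * s) * (1 / 2 * Q * (L * s + 2 * X * m * ((Real.exp (lam * s) - 1) / lam))) := by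
            rw [hm]; gcongr
        _ = Real.exp (-lam * s) * (1 / 2 * Q * (L * s)) +
              Q * X * m / lam * (Real.exp (-lam * s) * Real.exp (lam * s) - Real.exp (-lam * s)) := by ring
        _ ≤ 1 * (1 / 2 * Q * (L * X)) + Q * X * m / lam * 1 := by
            rw [e1]
            gcongr
            linarith [Real.exp_pos (-lam * s)]
        _ = _ := by ring
    have e3 : Q * X * m / lam ≤ m / 2 := by
      rw [div_le_iff₀ hlam0, hlam]
      nlinarith
    nlinarith
  have := hle X 0 hX0.le le_rfl (by simp)
  rw [add_zero] at this
  calc _ ≤ _ := this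
    _ ≤ Real.exp (lam * X) * (Q * X * L) := by gcongr
    _ = _ := by ring

lemma WSol.of_char (b : ℝ) (q G : ℝ → ℂ) (W Z Zx : ℝ → ℝ → ℂ) (κ : ℂ) (hG : Continuous G)
    (hWc : ContinuousOn (fun z : ℝ × ℝ => W z.1 z.2) (Set.Icc 0 b ×ˢ Set.univ))
    (hZc : ContinuousOn (fun z : ℝ × ℝ => Zx z.1 z.2) (Set.Icc 0 b ×ˢ Set.univ))
    (hW0 : ∀ t, W 0 t = G t) (hZ0 : ∀ t, Zx 0 t = G t + κ)
    (hZ : ∀ r ∈ Set.Ico 0 b, ∀ t, HasDerivAt (Z r) (W r t) t)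
    (hp : ∀ r ∈ Set.Ico 0 b, ∀ c : ℝ, HasDerivAt (fun r => W r (c - r) + Zx r (c - r)) (q r * Z r (c - r)) r)
    (hm : ∀ r ∈ Set.Ico 0 b, ∀ c : ℝ, HasDerivAt (fun r => W r (c + r) - Zx r (c + r)) (-(q r * Z r (c + r))) r) :
    WSol b q G W := by
  refine ⟨hG, hWc, ?_⟩
  have hWr : ∀ r ∈ Set.Icc 0 b, Continuous (W r) := by
    intro r hr
    rw [← continuousOn_univ]
    exact hWc.comp (f := fun τ : ℝ => (r, τ)) (by fun_prop) (fun τ _ => ⟨hr, Set.mem_univ _⟩)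
  intro s hs t
  refine ⟨fun r => 1 / 2 * ((W r ((t + s) - r) + Zx r ((t + s) - r)) + (W r ((t - s) + r) - Zx r ((t - s) + r))), ?_, ?_, ?_, ?_⟩
  · have e1 : Set.MapsTo (fun r : ℝ => (r, (t + s) - r)) (Set.Icc 0 s) (Set.Icc 0 b ×ˢ Set.univ) :=
      fun r hr => ⟨⟨hr.1, hr.2.trans hs.2⟩, Set.mem_univ _⟩
    have e2 : Set.MapsTo (fun r : ℝ => (r, (t - s) + r)) (Set.Icc 0 s) (Set.Icc 0 b ×ˢ Set.univ) :=
      fun r hr => ⟨⟨hr.1, hr.2.trans hs.2⟩, Set.mem_univ _⟩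
    exact continuousOn_const.mul (((hWc.comp (by fun_prop) e1).add (hZc.comp (by fun_prop) e1)).add
      ((hWc.comp (by fun_prop) e2).sub (hZc.comp (by fun_prop) e2)))
  · simp only [hW0, hZ0, sub_zero, add_zero]
    rw [add_comm s t]; ring
  · have e1 : t + s - s = t := by ring
    have e2 : t - s + s = t := by ring
    simp only [e1, e2]; ring
  · intro r hr
    have hrb : r ∈ Set.Ico 0 b := ⟨hr.1, hr.2.trans_le hs.2⟩
    rw [intervalIntegral.integral_eq_sub_of_hasDerivAt (f := Z r) (fun τ _ => hZ r hrb τ)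
      ((hWr r ⟨hrb.1, hrb.2.le⟩).intervalIntegrable _ _)]
    refine (((hp r hrb (t + s)).add (hm r hrb (t - s))).const_mul (1 / 2 : ℂ)).congr_deriv ?_
    have e1 : t + (s - r) = t + s - r := by ring
    have e2 : t - (s - r) = t - s + r := by ring
    rw [e1, e2]; ring

lemma WSol_exp (b : ℝ) (hb : 0 < b) (q : ℝ → ℂ) (ω : ℝ) (y y' : ℝ → ℂ)
    (hy : ∀ x ∈ Set.Icc (-b) b, HasDerivAt y (y' x) x)
    (hy' : ∀ x ∈ Set.Icc (-b) b, HasDerivAt y' (q x * y x - (ω : ℂ) ^ 2 * y x) x)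
    (h0 : y 0 = 1) (h0' : y' 0 = Complex.I * ω) :
    WSol b q (fun t => Complex.exp (Complex.I * ω * t)) (fun s t => y s * Complex.exp (Complex.I * ω * t)) := by
  have hsub : Set.Icc 0 b ⊆ Set.Icc (-b) b := Set.Icc_subset_Icc (by linarith) le_rfl
  have hyc : ContinuousOn y (Set.Icc 0 b) := fun x hx => (hy x (hsub hx)).continuousAt.continuousWithinAt
  have hyc' : ContinuousOn y' (Set.Icc 0 b) := fun x hx => (hy' x (hsub hx)).continuousAt.continuousWithinAt
  have hfst : Set.MapsTo (Prod.fst : ℝ × ℝ → ℝ) (Set.Icc 0 b ×ˢ Set.univ) (Set.Icc 0 b) := fun z hz => hz.1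
  have hyc2 := hyc.comp continuousOn_fst hfst
  have hyc2' := hyc'.comp continuousOn_fst hfst
  have hexp : ∀ t : ℝ, HasDerivAt (fun t : ℝ => Complex.exp (Complex.I * ω * t))
      (Complex.exp (Complex.I * ω * t) * (Complex.I * ω * 1)) t := by
    intro t
    exact (((Complex.ofRealCLM.hasDerivAt (x := t))).const_mul (Complex.I * ω)).cexp
  have hexpm : ∀ c t : ℝ, HasDerivAt (fun t : ℝ => Complex.exp (Complex.I * ω * ((c - t : ℝ) : ℂ)))
      (-(Complex.exp (Complex.I * ω * ((c - t : ℝ) : ℂ)) * (Complex.I * ω))) t := by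
    intro c t
    refine ((hexp (c - t)).scomp t ((hasDerivAt_id t).const_sub c)).congr_deriv ?_
    simp
  have hexpp : ∀ c t : ℝ, HasDerivAt (fun t : ℝ => Complex.exp (Complex.I * ω * ((c + t : ℝ) : ℂ)))
      ((Complex.exp (Complex.I * ω * ((c + t : ℝ) : ℂ)) * (Complex.I * ω))) t := by
    intro c t
    refine ((hexp (c + t)).scomp t ((hasDerivAt_id t).const_add c)).congr_deriv ?_
    simp
  by_cases hω : ω = 0
  · subst hω
    simp only [Complex.ofReal_zero, mul_zero, zero_mul, Complex.exp_zero, mul_one]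
    have hcm : ∀ c t : ℝ, HasDerivAt (fun t : ℝ => ((c - t : ℝ) : ℂ)) (-1) t := by
      intro c t
      simpa using ((hasDerivAt_id t).const_sub c).ofReal_comp
    have hcp : ∀ c t : ℝ, HasDerivAt (fun t : ℝ => ((c + t : ℝ) : ℂ)) 1 t := by
      intro c t
      simpa using ((hasDerivAt_id t).const_add c).ofReal_comp
    refine WSol.of_char b q _ _ (fun s t => y s * t) (fun s t => y' s * t) (-1) continuous_const hyc2
      (hyc2'.mul (by fun_prop)) (fun t => h0) (fun t => by simp [h0']) ?_ ?_ ?_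
    · intro r hr t
      simpa using ((hasDerivAt_id t).ofReal_comp).const_mul (y r)
    · intro r hr c
      have hr' := hsub ⟨hr.1, hr.2.le⟩
      refine ((hy r hr').add ((hy' r hr').mul (hcm c r))).congr_deriv ?_
      simp; ring
    · intro r hr c
      have hr' := hsub ⟨hr.1, hr.2.le⟩
      refine ((hy r hr').sub ((hy' r hr').mul (hcp c r))).congr_deriv ?_
      simp; ring
  · have hω' : (ω : ℂ) ≠ 0 := by exact_mod_cast hω
    have hIω : Complex.I * ω ≠ 0 := mul_ne_zero Complex.I_ne_zero hω'
    have hsq : (ω : ℂ) ^ 2 = - (Complex.I * ω) ^ 2 := by rw [mul_pow, Complex.I_sq]; ring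
    refine WSol.of_char b q _ _ (fun s t => y s * (Complex.exp (Complex.I * ω * t) / (Complex.I * ω)))
      (fun s t => y' s * (Complex.exp (Complex.I * ω * t) / (Complex.I * ω))) 0 (by fun_prop)
      (hyc2.mul (by fun_prop)) (hyc2'.mul (by fun_prop)) (fun t => by simp [h0]) (fun t => by rw [h0']; field_simp; simp) ?_ ?_ ?_
    · intro r hr t
      refine (((hexp t).div_const (Complex.I * ω)).const_mul (y r)).congr_deriv ?_
      field_simp
    · intro r hr c
      have hr' := hsub ⟨hr.1, hr.2.le⟩
      refine (((hy r hr').mul (hexpm c r)).add ((hy' r hr').mul ((hexpm c r).div_const (Complex.I * ω)))).congr_deriv ?_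
      rw [hsq]
      field_simp; ring
    · intro r hr c
      have hr' := hsub ⟨hr.1, hr.2.le⟩
      refine (((hy r hr').mul (hexpp c r)).sub ((hy' r hr').mul ((hexpp c r).div_const (Complex.I * ω)))).congr_deriv ?_
      rw [hsq]
      field_simp; ring

lemma WSol_poly_aux (b : ℝ) (q : ℝ → ℂ) (ph ch : ℕ → ℝ → ℂ)
    (hphc : ∀ k, ContinuousOn (ph k) (Set.Icc 0 b)) (hchc : ∀ k, ContinuousOn (ch k) (Set.Icc 0 b))
    (hph : ∀ k, ∀ r ∈ Set.Ico 0 b, HasDerivAt (ph k) (ch k r) r)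
    (hch0 : ∀ r ∈ Set.Ico 0 b, HasDerivAt (ch 0) (q r * ph 0 r) r)
    (hch1 : ∀ r ∈ Set.Ico 0 b, HasDerivAt (ch 1) (q r * ph 1 r) r)
    (hch : ∀ k, ∀ r ∈ Set.Ico 0 b, HasDerivAt (ch (k + 2)) (q r * ph (k + 2) r + ph k r) r)
    (hph0 : ph 0 0 = 1) (hph0' : ∀ k, ph (k + 1) 0 = 0)
    (hc0 : ch 0 0 = 0) (hc1 : ch 1 0 = 1) (hc2 : ∀ k, ch (k + 2) 0 = 0)
    (a : ℕ → ℝ → ℂ) (ha : ∀ k t, HasDerivAt (a k) (a (k + 1) t) t) (d : ℕ) 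
    (had : ∀ k, d + 2 ≤ k → ∀ t, a k t = 0) :
    WSol b q (a 1) (fun s t => ∑ k ∈ Finset.range (d + 2), ph k s * a (k + 1) t) := by
  have hac : ∀ k, Continuous (a k) := fun k => continuous_iff_continuousAt.2 fun t => (ha k t).continuousAt
  have ham : ∀ (k : ℕ) (c t : ℝ), HasDerivAt (fun t : ℝ => a k (c - t)) (-(a (k + 1) (c - t))) t := by
    intro k c t
    refine ((ha k (c - t)).scomp t ((hasDerivAt_id t).const_sub c)).congr_deriv ?_
    simp
  have hap : ∀ (k : ℕ) (c t : ℝ), HasDerivAt (fun t : ℝ => a k (c + t)) (a (k + 1) (c + t)) t := by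
    intro k c t
    refine ((ha k (c + t)).scomp t ((hasDerivAt_id t).const_add c)).congr_deriv ?_
    simp
  have hfst : Set.MapsTo (Prod.fst : ℝ × ℝ → ℝ) (Set.Icc 0 b ×ˢ Set.univ) (Set.Icc 0 b) := fun z hz => hz.1
  set th : ℕ → ℝ → ℂ := fun k r => if k < 2 then 0 else ph (k - 2) r with hth
  have hchd : ∀ k, ∀ r ∈ Set.Ico 0 b, HasDerivAt (ch k) (q r * ph k r + th k r) r := by
    intro k r hr
    rcases k with _ | _ | k
    · simpa [hth] using hch0 r hr
    · simpa [hth] using hch1 r hr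
    · simpa [hth] using hch k r hr
  have hsum : ∀ r t, ∑ k ∈ Finset.range (d + 2), th k r * a k t = ∑ k ∈ Finset.range (d + 2), ph k r * a (k + 2) t := by
    intro r t
    rw [Finset.sum_range_succ' _ (d + 1), Finset.sum_range_succ' _ d, Finset.sum_range_succ _ (d + 1),
      Finset.sum_range_succ _ d, had (d + 2) (by omega), had (d + 1 + 2) (by omega)]
    simp [hth]
  refine WSol.of_char b q _ _ (fun s t => ∑ k ∈ Finset.range (d + 2), ph k s * a k t)
    (fun s t => ∑ k ∈ Finset.range (d + 2), ch k s * a k t) 0 (hac 1) ?_ ?_ ?_ ?_ ?_ ?_ ?_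
  · exact continuousOn_finsetSum _ fun k _ => ((hphc k).comp continuousOn_fst hfst).mul
      ((hac (k + 1)).comp continuous_snd).continuousOn
  · exact continuousOn_finsetSum _ fun k _ => ((hchc k).comp continuousOn_fst hfst).mul
      ((hac k).comp continuous_snd).continuousOn
  · intro t
    rw [Finset.sum_range_succ']
    simp [hph0, hph0']
  · intro t
    rw [Finset.sum_range_succ', Finset.sum_range_succ']
    simp [hc0, hc1, hc2]
  · intro r hr t
    exact HasDerivAt.fun_sum fun k _ => (ha k t).const_mul (ph k r)
  · intro r hr c
    refine ((HasDerivAt.fun_sum fun k _ => (hph k r hr).mul (ham (k + 1) c r)).add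
      (HasDerivAt.fun_sum fun k _ => (hchd k r hr).mul (ham k c r))).congr_deriv ?_
    have := hsum r (c - r)
    rw [← sub_eq_zero, ← Finset.sum_sub_distrib] at this
    rw [← Finset.sum_add_distrib, Finset.mul_sum, ← sub_eq_zero, ← Finset.sum_sub_distrib, ← this]
    refine Finset.sum_congr rfl fun k _ => ?_
    ring
  · intro r hr c
    refine ((HasDerivAt.fun_sum fun k _ => (hph k r hr).mul (hap (k + 1) c r)).sub
      (HasDerivAt.fun_sum fun k _ => (hchd k r hr).mul (hap k c r))).congr_deriv ?_
    have := hsum r (c + r)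
    rw [← sub_eq_zero, ← Finset.sum_sub_distrib, ← neg_eq_zero, ← Finset.sum_neg_distrib] at this
    rw [← Finset.sum_sub_distrib, Finset.mul_sum, ← Finset.sum_neg_distrib, ← sub_eq_zero, ← Finset.sum_sub_distrib, ← this]
    refine Finset.sum_congr rfl fun k _ => ?_
    ring

lemma prim_cont (b : ℝ) (hb : 0 < b) (g : ℝ → ℂ) (hg : ContinuousOn g (Set.Icc (-b) b)) :
    ContinuousOn (fun x => ∫ s in (0:ℝ)..x, g s) (Set.Icc (-b) b) := by
  have h : Set.uIcc (-b) b = Set.Icc (-b) b := Set.uIcc_of_le (by linarith)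
  have := intervalIntegral.continuousOn_primitive_interval' (μ := volume) (f := g) (a := 0) (b₁ := -b) (b₂ := b)
    (ContinuousOn.intervalIntegrable (by rwa [h])) (by rw [h]; constructor <;> linarith)
  rwa [h] at this

lemma prim_deriv (b : ℝ) (hb : 0 < b) (g : ℝ → ℂ) (hg : ContinuousOn g (Set.Icc (-b) b))
    (x : ℝ) (hx : x ∈ Set.Ico 0 b) : HasDerivAt (fun x => ∫ s in (0:ℝ)..x, g s) (g x) x := by
  have hx' : x ∈ Set.Ioo (-b) b := ⟨by linarith [hx.1], hx.2⟩
  refine intervalIntegral.integral_hasDerivAt_right ?_ ?_ ?_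
  · refine ContinuousOn.intervalIntegrable (hg.mono ?_)
    rw [Set.uIcc_of_le hx.1]
    exact Set.Icc_subset_Icc (by linarith) hx.2.le
  · exact ContinuousOn.stronglyMeasurableAtFilter isOpen_Ioo (hg.mono Set.Ioo_subset_Icc_self) x hx'
  · exact hg.continuousAt (Icc_mem_nhds hx'.1 hx'.2)

def Yh (f : ℝ → ℂ) (n : ℕ) (x : ℝ) : ℂ :=
  (if Odd n then formalX f n x else formalXt f n x) / n.factorial

def Dh (f : ℝ → ℂ) (n : ℕ) (x : ℝ) : ℂ :=
  (if Odd n then formalXt f n x else formalX f n x) / n.factorial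

lemma Yh_zero (f : ℝ → ℂ) (x : ℝ) : Yh f 0 x = 1 := by simp [Yh, formalXt]
lemma Dh_zero (f : ℝ → ℂ) (x : ℝ) : Dh f 0 x = 1 := by simp [Dh, formalX]

lemma fact_aux (n : ℕ) (z : ℂ) : ((n:ℂ) + 1) * z / ((n + 1).factorial : ℂ) = z / n.factorial := by
  have h1 : (n.factorial : ℂ) ≠ 0 := by exact_mod_cast n.factorial_ne_zero
  have h2 : (n : ℂ) + 1 ≠ 0 := by exact_mod_cast n.succ_ne_zero
  rw [Nat.factorial_succ]; push_cast
  field_simp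

lemma Yh_succ (f : ℝ → ℂ) (n : ℕ) (x : ℝ) :
    Yh f (n + 1) x = ∫ s in (0:ℝ)..x, Dh f n s * ((f s) ^ 2)⁻¹ := by
  rcases Nat.even_or_odd n with h | h
  · have h1 : Odd (n + 1) := h.add_one
    have h2 : ¬ Odd n := by simpa using h
    simp only [Yh, Dh, if_pos h1, if_neg h2, formalX, fact_aux, h1.neg_one_pow, zpow_neg_one]
    rw [← intervalIntegral.integral_div]
    congr 1; funext s; ring
  · have h1 : ¬ Odd (n + 1) := by simpa using h.add_one
    simp only [Yh, Dh, if_neg h1, if_pos h, formalXt, fact_aux, h.neg_one_pow, zpow_neg_one]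
    rw [← intervalIntegral.integral_div]
    congr 1; funext s; ring

lemma Dh_succ (f : ℝ → ℂ) (n : ℕ) (x : ℝ) :
    Dh f (n + 1) x = ∫ s in (0:ℝ)..x, Yh f n s * (f s) ^ 2 := by
  rcases Nat.even_or_odd n with h | h
  · have h1 : Odd (n + 1) := h.add_one
    have h2 : ¬ Odd n := by simpa using h
    simp only [Yh, Dh, if_pos h1, if_neg h2, formalXt, fact_aux, h.neg_one_pow, zpow_one]
    rw [← intervalIntegral.integral_div]
    congr 1; funext s; ring
  · have h1 : ¬ Odd (n + 1) := by simpa using h.add_one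
    have h3 : Even (n + 1) := h.add_one
    simp only [Yh, Dh, if_neg h1, if_pos h, formalX, fact_aux, h3.neg_one_pow, zpow_one]
    rw [← intervalIntegral.integral_div]
    congr 1; funext s; ring

lemma YD_cont (b : ℝ) (hb : 0 < b) (f : ℝ → ℂ) (hf : ContinuousOn f (Set.Icc (-b) b))
    (hfne : ∀ x ∈ Set.Icc (-b) b, f x ≠ 0) (n : ℕ) :
    ContinuousOn (Yh f n) (Set.Icc (-b) b) ∧ ContinuousOn (Dh f n) (Set.Icc (-b) b) := by
  induction n with
  | zero =>
    constructor
    · exact continuousOn_const.congr fun x _ => Yh_zero f x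
    · exact continuousOn_const.congr fun x _ => Dh_zero f x
  | succ n ih =>
    constructor
    · exact (prim_cont b hb _ (ih.2.mul ((hf.pow 2).inv₀ fun x hx => pow_ne_zero 2 (hfne x hx)))).congr
        fun x _ => Yh_succ f n x
    · exact (prim_cont b hb _ (ih.1.mul (hf.pow 2))).congr fun x _ => Dh_succ f n x

def Eh (f : ℝ → ℂ) : ℕ → ℝ → ℂ
  | 0 => fun _ => 0
  | n + 1 => Dh f n

lemma WSol_poly (b : ℝ) (hb : 0 < b) (q : ℝ → ℂ)
    (f f' : ℝ → ℂ)
    (hf : ∀ x ∈ Set.Icc (-b) b, HasDerivAt f (f' x) x)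
    (hf' : ∀ x ∈ Set.Icc (-b) b, HasDerivAt f' (q x * f x) x)
    (hf0 : f 0 = 1) (hf'0 : f' 0 = 0)
    (hfne : ∀ x ∈ Set.Icc (-b) b, f x ≠ 0) (p : Polynomial ℂ) :
    ∃ W, WSol b q (fun t => p.eval (t : ℂ)) W ∧
      ∀ x, W x 0 = p.sum (fun k c => c * formalPower f k x) := by
  have hfc : ContinuousOn f (Set.Icc (-b) b) := fun x hx => (hf x hx).continuousAt.continuousWithinAt
  have hfc' : ContinuousOn f' (Set.Icc (-b) b) := fun x hx => (hf' x hx).continuousAt.continuousWithinAt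
  have hsub : Set.Icc 0 b ⊆ Set.Icc (-b) b := Set.Icc_subset_Icc (by linarith) le_rfl
  have hYc := fun n => (YD_cont b hb f hfc hfne n).1
  have hDc := fun n => (YD_cont b hb f hfc hfne n).2
  have hEc : ∀ n, ContinuousOn (Eh f n) (Set.Icc (-b) b) := by
    intro n
    rcases n with _ | n
    · exact continuousOn_const
    · exact hDc n
  have hYd : ∀ n, ∀ r ∈ Set.Ico 0 b, HasDerivAt (Yh f n) (Eh f n r * ((f r) ^ 2)⁻¹) r := by
    intro n r hr
    rcases n with _ | n
    · have : Yh f 0 = fun _ => 1 := funext fun x => Yh_zero f x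
      rw [this]
      simpa [Eh] using hasDerivAt_const r (1:ℂ)
    · have : Yh f (n + 1) = fun x => _ := funext fun x => Yh_succ f n x
      rw [this]
      exact prim_deriv b hb _ ((hDc n).mul ((hfc.pow 2).inv₀ fun x hx => pow_ne_zero 2 (hfne x hx))) r hr
  have hD0 : Dh f 0 = fun _ => 1 := funext fun x => Dh_zero f x
  have hDd : ∀ n, ∀ r ∈ Set.Ico 0 b, HasDerivAt (Dh f (n + 1)) (Yh f n r * (f r) ^ 2) r := by
    intro n r hr
    have : Dh f (n + 1) = fun x => _ := funext fun x => Dh_succ f n x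
    rw [this]
    exact prim_deriv b hb _ ((hYc n).mul (hfc.pow 2)) r hr
  -- generic derivative of χ
  have hchi : ∀ n, ∀ r ∈ Set.Ico 0 b, ∀ T : ℂ, HasDerivAt (Eh f n) (T * (f r) ^ 2) r →
      HasDerivAt (fun x => f' x * Yh f n x + Eh f n x / f x) (q r * (f r * Yh f n r) + f r * T) r := by
    intro n r hr T hT
    have hr' := hsub ⟨hr.1, hr.2.le⟩
    have hne := hfne r hr'
    refine (((hf' r hr').mul (hYd n r hr)).add (hT.div (hf r hr') hne)).congr_deriv ?_
    field_simp
    ring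
  set a : ℕ → ℝ → ℂ := fun k => match k with
    | 0 => fun t => ∫ τ in (0:ℝ)..t, p.eval (τ : ℂ)
    | k + 1 => fun t => (Polynomial.derivative^[k] p).eval (t : ℂ) with ha
  have had : ∀ k t, HasDerivAt (a k) (a (k + 1) t) t := by
    intro k t
    rcases k with _ | k
    · simp only [ha, Function.iterate_zero, id]
      have : Continuous fun τ : ℝ => p.eval (τ : ℂ) := p.continuous.comp Complex.continuous_ofReal
      exact (this.integral_hasStrictDerivAt 0 t).hasDerivAt
    · simp only [ha, Function.iterate_succ_apply']
      exact (Polynomial.hasDerivAt _ (t:ℂ)).comp_ofReal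
  have hmain := WSol_poly_aux b q (fun k x => f x * Yh f k x) (fun k x => f' x * Yh f k x + Eh f k x / f x)
    (fun k => (hfc.mul (hYc k)).mono hsub)
    (fun k => ((hfc'.mul (hYc k)).add ((hEc k).div hfc hfne)).mono hsub)
    (fun k r hr => by
      have hr' := hsub ⟨hr.1, hr.2.le⟩
      have hne := hfne r hr'
      refine ((hf r hr').mul (hYd k r hr)).congr_deriv ?_
      field_simp)
    (fun r hr => by
      have := hchi 0 r hr 0 (by simpa [Eh] using hasDerivAt_const r (0:ℂ))
      simpa using this)
    (fun r hr => by
      have := hchi 1 r hr 0 (by simpa [Eh, hD0] using hasDerivAt_const r (1:ℂ))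
      simpa using this)
    (fun k r hr => hchi (k + 2) r hr (Yh f k r) (hDd k r hr))
    (by simp [hf0, Yh_zero]) (fun k => by simp [Yh_succ])
    (by simp [hf'0, Eh]) (by simp [hf'0, Eh, hf0, Dh_zero]) (fun k => by simp [hf'0, Eh, Dh_succ])
    a had p.natDegree
    (fun k hk t => by
      obtain ⟨j, rfl⟩ : ∃ j, k = j + 1 := ⟨k - 1, by omega⟩
      simp only [ha]
      rw [Polynomial.iterate_derivative_eq_zero (by omega)]; simp)
  refine ⟨_, hmain, ?_⟩
  intro x
  rw [Polynomial.sum_over_range' p (by simp) (p.natDegree + 2) (by omega)]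
  refine Finset.sum_congr rfl fun k _ => ?_
  have h1 : (k.factorial : ℂ) ≠ 0 := by exact_mod_cast k.factorial_ne_zero
  simp only [ha, Complex.ofReal_zero]
  rw [← Polynomial.coeff_zero_eq_eval_zero, Polynomial.coeff_iterate_derivative]
  simp only [zero_add, Nat.descFactorial_self, nsmul_eq_mul, Yh, formalPower]
  split_ifs <;> field_simp

abbrev muI : Measure ℝ := volume.restrict (Set.Ioc (-1:ℝ) 1)

lemma memLp_cont {g : ℝ → ℂ} (hg : Continuous g) : MemLp g 2 muI := by
  obtain ⟨C, hC⟩ := (isCompact_Icc (a := (-1:ℝ)) (b := 1)).exists_bound_of_continuousOn hg.continuousOn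
  refine MemLp.of_bound hg.aestronglyMeasurable C ?_
  filter_upwards [ae_restrict_mem measurableSet_Ioc] with s hs
  exact hC s ⟨hs.1.le, hs.2⟩

/-- embedding of continuous functions -/
def emb (g : ℝ → ℂ) (hg : Continuous g) : Lp ℂ 2 muI := (memLp_cont hg).toLp g

lemma emb_inner (g h : ℝ → ℂ) (hg : Continuous g) (hh : Continuous h) :
    inner ℂ (emb g hg) (emb h hh) = ∫ s in (-1:ℝ)..1, starRingEnd ℂ (g s) * h s := by
  rw [L2.inner_def, intervalIntegral.integral_of_le (by norm_num)]
  refine integral_congr_ae ?_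
  filter_upwards [(memLp_cont hg).coeFn_toLp, (memLp_cont hh).coeFn_toLp] with s h1 h2
  rw [emb, emb, h1, h2]
  simp [mul_comm]

lemma emb_norm_sq (g : ℝ → ℂ) (hg : Continuous g) :
    ‖emb g hg‖ ^ 2 = ∫ s in (-1:ℝ)..1, ‖g s‖ ^ 2 := by
  have h := emb_inner g g hg hg
  rw [inner_self_eq_norm_sq_to_K] at h
  apply Complex.ofReal_injective
  rw [← intervalIntegral.integral_ofReal]
  push_cast
  refine Eq.trans ?_ (h.trans ?_)
  · rfl
  · simp only [Complex.conj_mul']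

lemma emb_sub (g h : ℝ → ℂ) (hg : Continuous g) (hh : Continuous h) :
    emb g hg - emb h hh = emb (fun s => g s - h s) (hg.sub hh) :=
  (MemLp.toLp_sub (memLp_cont hg) (memLp_cont hh)).symm

lemma emb_L1 (g : ℝ → ℂ) (hg : Continuous g) :
    ∫ s in (-1:ℝ)..1, ‖g s‖ ≤ Real.sqrt 2 * ‖emb g hg‖ := by
  have h1 := emb_inner (fun _ => 1) (fun s => (‖g s‖ : ℂ)) continuous_const (by fun_prop)
  have h2 := norm_inner_le_norm (𝕜 := ℂ) (emb (fun _ => 1) continuous_const) (emb (fun s => (‖g s‖ : ℂ)) (by fun_prop))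
  have h3 : ‖emb (fun s => (‖g s‖ : ℂ)) (by fun_prop)‖ = ‖emb g hg‖ := by
    rw [← sq_eq_sq₀ (norm_nonneg _) (norm_nonneg _), emb_norm_sq, emb_norm_sq]
    simp
  have h4 : ‖emb (fun _ => 1) continuous_const‖ = Real.sqrt 2 := by
    rw [← sq_eq_sq₀ (norm_nonneg _) (Real.sqrt_nonneg _), emb_norm_sq, Real.sq_sqrt (by norm_num)]
    simp; norm_num
  rw [h1, h3, h4] at h2
  simp only [map_one, one_mul] at h2
  rw [intervalIntegral.integral_ofReal, Complex.norm_real] at h2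
  exact (le_abs_self _).trans h2

lemma emb_small (g : ℝ → ℂ) (hg : Continuous g) (δ : ℝ) (hδ : 0 ≤ δ)
    (h : ∀ s ∈ Set.Icc (-1:ℝ) 1, ‖g s‖ ≤ δ / 2) : ‖emb g hg‖ ≤ δ := by
  rw [← sq_le_sq₀ (norm_nonneg _) hδ, emb_norm_sq]
  calc ∫ s in (-1:ℝ)..1, ‖g s‖ ^ 2 ≤ ∫ s in (-1:ℝ)..1, (δ / 2) ^ 2 := by
        refine intervalIntegral.integral_mono_on (by norm_num) (Continuous.intervalIntegrable (by fun_prop) _ _)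
          (Continuous.intervalIntegrable (by fun_prop) _ _) fun s hs => ?_
        have := h s hs
        gcongr
    _ ≤ δ ^ 2 := by
        simp
        nlinarith

lemma poly_cont (p : Polynomial ℂ) : Continuous fun s : ℝ => p.eval (s : ℂ) :=
  p.continuous.comp Complex.continuous_ofReal

def embP : Polynomial ℂ →ₗ[ℂ] Lp ℂ 2 muI where
  toFun p := emb (fun s => p.eval (s : ℂ)) (poly_cont p)
  map_add' p q := by
    simp only [emb, Polynomial.eval_add]
    exact MemLp.toLp_add (memLp_cont (poly_cont p)) (memLp_cont (poly_cont q))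
  map_smul' c p := by
    simp only [emb, Polynomial.eval_smul]
    exact MemLp.toLp_const_smul c (memLp_cont (poly_cont p))

lemma poly_eval_real (p : Polynomial ℝ) (s : ℝ) :
    (p.map (algebraMap ℝ ℂ)).eval (s : ℂ) = ((p.eval s : ℝ) : ℂ) := by
  rw [Polynomial.eval_map]
  exact Polynomial.eval₂_at_apply (algebraMap ℝ ℂ) s

lemma poly_approx (g : ℝ → ℂ) (hg : Continuous g) (δ : ℝ) (hδ : 0 < δ) :
    ∃ p : Polynomial ℂ, ∀ s ∈ Set.Icc (-1:ℝ) 1, ‖g s - p.eval (s : ℂ)‖ ≤ δ := by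
  obtain ⟨p1, h1⟩ := exists_polynomial_near_of_continuousOn (-1) 1 (fun s => (g s).re) (by fun_prop) (δ / 2) (by positivity)
  obtain ⟨p2, h2⟩ := exists_polynomial_near_of_continuousOn (-1) 1 (fun s => (g s).im) (by fun_prop) (δ / 2) (by positivity)
  refine ⟨p1.map (algebraMap ℝ ℂ) + Polynomial.C Complex.I * p2.map (algebraMap ℝ ℂ), fun s hs => ?_⟩
  have e : ∀ p : Polynomial ℝ, (p.map (algebraMap ℝ ℂ)).eval (s : ℂ) = ((p.eval s : ℝ) : ℂ) := fun p =>
    poly_eval_real p s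
  rw [Polynomial.eval_add, Polynomial.eval_mul, Polynomial.eval_C, e, e]
  refine (Complex.norm_le_abs_re_add_abs_im _).trans ?_
  have a1 := h1 s hs
  have a2 := h2 s hs
  rw [abs_sub_comm] at a1 a2
  simp
  linarith

def Lx (f : ℝ → ℂ) (x : ℝ) : Polynomial ℂ →ₗ[ℂ] ℂ :=
  Polynomial.lsum (fun k => LinearMap.mulRight ℂ (formalPower f k x / (x : ℂ) ^ k)) - Polynomial.leval 1

lemma Lx_apply (f : ℝ → ℂ) (x : ℝ) (p : Polynomial ℂ) (n : ℕ) (hn : p.natDegree < n) :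
    Lx f x p = (∑ k ∈ Finset.range n, p.coeff k * formalPower f k x / (x : ℂ) ^ k) - p.eval 1 := by
  simp only [Lx, LinearMap.sub_apply, Polynomial.lsum_apply, Polynomial.leval_apply]
  rw [Polynomial.sum_over_range' p (by simp) n hn]
  simp [mul_div_assoc]

lemma fixed_x
    (b : ℝ) (hb : 0 < b) (q : ℝ → ℂ) (hq : ContinuousOn q (Set.Icc (-b) b))
    (f f' : ℝ → ℂ)
    (hf : ∀ x ∈ Set.Icc (-b) b, HasDerivAt f (f' x) x)
    (hf' : ∀ x ∈ Set.Icc (-b) b, HasDerivAt f' (q x * f x) x)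
    (hf0 : f 0 = 1) (hf'0 : f' 0 = 0)
    (hfne : ∀ x ∈ Set.Icc (-b) b, f x ≠ 0) (x : ℝ) (hx : x ∈ Set.Ioc (0:ℝ) b) :
    ∃ ε : ℕ → ℝ, (∀ N : ℕ, 0 ≤ ε N) ∧ Tendsto ε atTop (𝓝 0) ∧
      ∀ (ω : ℝ) (y y' : ℝ → ℂ),
        (∀ x ∈ Set.Icc (-b) b, HasDerivAt y (y' x) x) →
        (∀ x ∈ Set.Icc (-b) b, HasDerivAt y' (q x * y x - (ω : ℂ) ^ 2 * y x) x) →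
        y 0 = 1 → y' 0 = Complex.I * ω →
        ∀ (N : ℕ),
          ‖y x - (Complex.exp (Complex.I * ω * x) +
        ∑ n ∈ Finset.range N, betaCoef f n x *
          ∫ s in (-1:ℝ)..1, (((legendreP n).eval s : ℝ) : ℂ) * Complex.exp (Complex.I * ω * x * s))‖
            ≤ ε N * Real.sqrt (2 * x) := by
  have hx0 : 0 < x := hx.1
  have hxc : (x : ℂ) ≠ 0 := by exact_mod_cast hx0.ne'
  obtain ⟨Q0, hQ0⟩ := (isCompact_Icc (a := -b) (b := b)).exists_bound_of_continuousOn hq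
  set Q := max Q0 0 with hQdef
  have hQ : ∀ r ∈ Set.Icc 0 b, ‖q r‖ ≤ Q := fun r hr =>
    (hQ0 r ⟨by linarith [hr.1], hr.2⟩).trans (le_max_left _ _)
  have hQn : 0 ≤ Q := le_max_right _ _
  set C : ℝ := (Real.exp ((2 * Q * x + 1) * x) * (Q * x)) * x * Real.sqrt 2 with hC
  have hC0 : 0 ≤ C := by positivity
  have hbound : ∀ G W (h : WSol b q G W), ‖W x 0 - G x‖ ≤
      C * ‖emb (fun s => G (x * s)) (h.1.comp (continuous_const.mul continuous_id))‖ := by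
    intro G W h
    have h1 := WSol.estimate b q Q hQn hQ x hx G W h
    have h2 := emb_L1 (fun s => G (x * s)) (h.1.comp (continuous_const.mul continuous_id))
    have h3 := intervalIntegral.smul_integral_comp_mul_left (a := -1) (b := 1) (fun t => ‖G t‖) x
    simp only [mul_neg, mul_one, smul_eq_mul] at h3
    rw [← h3] at h1
    refine h1.trans ?_
    calc _ ≤ Real.exp ((2 * Q * x + 1) * x) * (Q * x) * (x * (Real.sqrt 2 * ‖emb (fun s => G (x * s)) (h.1.comp (continuous_const.mul continuous_id))‖)) := by
          gcongr
      _ = _ := by rw [hC]; ring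
  -- polynomial solutions in scaled form
  have hpoly : ∀ p : Polynomial ℂ, ∃ G W, WSol b q G W ∧ (∀ s : ℝ, G (x * s) = p.eval (s : ℂ)) ∧
      W x 0 - G x = Lx f x p := by
    intro p
    obtain ⟨W, h1, h2⟩ := WSol_poly b hb q f f' hf hf' hf0 hf'0 hfne (p.comp (Polynomial.C (x : ℂ)⁻¹ * Polynomial.X))
    refine ⟨_, W, h1, ?_, ?_⟩
    · intro s
      simp only [Polynomial.eval_comp, Polynomial.eval_mul, Polynomial.eval_C, Polynomial.eval_X]
      congr 1
      push_cast
      field_simp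
    · set n := max p.natDegree (p.comp (Polynomial.C (x : ℂ)⁻¹ * Polynomial.X)).natDegree + 1 with hn
      rw [h2, Lx_apply f x p n (by omega), Polynomial.sum_over_range' _ (by simp) n (by omega)]
      congr 1
      · refine Finset.sum_congr rfl fun k _ => ?_
        rw [Polynomial.comp_C_mul_X_coeff, inv_pow]
        ring
      · simp [hxc]
  have hL1 : ∀ p : Polynomial ℂ, ‖Lx f x p‖ ≤ C * ‖embP p‖ := by
    intro p
    obtain ⟨G, W, h1, h2, h3⟩ := hpoly p
    have := hbound G W h1
    simp only [h2, h3] at this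
    exact this
  set rt : ℕ → ℝ := fun n => Real.sqrt ((2 * n + 1) / 2) with hrt
  have hrt2 : ∀ n, rt n * rt n = (2 * n + 1) / 2 := fun n => Real.mul_self_sqrt (by positivity)
  have hrtpos : ∀ n, 0 < rt n := fun n => Real.sqrt_pos.2 (by positivity)
  set PC : ℕ → Polynomial ℂ := fun n => (legendreP n).map (algebraMap ℝ ℂ) with hPC
  have hPCeval : ∀ n (s : ℝ), (PC n).eval (s : ℂ) = (((legendreP n).eval s : ℝ) : ℂ) := fun n s =>
    poly_eval_real _ s
  set v : ℕ → Lp ℂ 2 muI := fun n => (rt n : ℂ) • embP (PC n) with hv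
  set c : ℕ → ℂ := fun n => (rt n : ℂ) * Lx f x (PC n) with hc
  have hinner : ∀ n m, inner ℂ (embP (PC n)) (embP (PC m)) = if n = m then (2 / (2 * n + 1) : ℂ) else 0 := by
    intro n m
    have h1 : inner ℂ (embP (PC n)) (embP (PC m)) = _ := emb_inner _ _ (poly_cont (PC n)) (poly_cont (PC m))
    rw [h1]
    simp only [hPCeval, Complex.conj_ofReal, ← Complex.ofReal_mul]
    rw [intervalIntegral.integral_ofReal]
    split_ifs with h
    · subst h; rw [leg_norm]; push_cast; rfl
    · rw [leg_orth n m h]; simp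
  have hvo : Orthonormal ℂ v := by
    rw [orthonormal_iff_ite]
    intro n m
    simp only [hv, inner_smul_left, inner_smul_right, hinner, Complex.conj_ofReal]
    split_ifs with h
    · subst h
      rw [← mul_assoc, ← Complex.ofReal_mul, hrt2]
      push_cast
      have : (2 * (n:ℂ) + 1) ≠ 0 := by exact_mod_cast (by omega : 2 * n + 1 ≠ 0)
      field_simp
    · simp
  have hsv : ∀ (d : ℕ) (a : ℕ → ℂ), ∑ n ∈ Finset.range d, a n • v n
      = embP (∑ n ∈ Finset.range d, (a n * rt n) • PC n) := by
    intro d a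
    simp only [map_sum, map_smul, hv, smul_smul]
  have hsc : ∀ (d : ℕ) (a : ℕ → ℂ), ∑ n ∈ Finset.range d, a n * c n
      = Lx f x (∑ n ∈ Finset.range d, (a n * rt n) • PC n) := by
    intro d a
    simp only [map_sum, map_smul, hc, smul_eq_mul, mul_assoc]
  obtain ⟨ε, hε0, hεt, hε⟩ := hilb_aux v hvo c C hC0 (fun d a => by rw [hsv, hsc]; exact hL1 _)
  refine ⟨fun N => ε N / Real.sqrt x, fun N => div_nonneg (hε0 N) (Real.sqrt_nonneg _), ?_, ?_⟩
  · simpa using hεt.div_const (Real.sqrt x)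
  intro ω y y' hy hy' hy0 hy0' N
  have hEW := WSol_exp b hb q ω y y' hy hy' hy0 hy0'
  have hec : Continuous fun s : ℝ => Complex.exp (Complex.I * ω * x * s) := by fun_prop
  set e := emb (fun s : ℝ => Complex.exp (Complex.I * ω * x * s)) hec with he
  have hen : ‖e‖ = Real.sqrt 2 := by
    rw [← sq_eq_sq₀ (norm_nonneg _) (Real.sqrt_nonneg _), he, emb_norm_sq, Real.sq_sqrt (by norm_num)]
    have : ∀ s : ℝ, ‖Complex.exp (Complex.I * ω * x * s)‖ = 1 := by
      intro s
      have : Complex.I * ω * x * s = ((ω * x * s : ℝ) : ℂ) * Complex.I := by push_cast; ring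
      rw [this, Complex.norm_exp_ofReal_mul_I]
    simp only [this]
    norm_num
  have key := hε e (y x - Complex.exp (Complex.I * ω * x)) (by
    intro δ hδ
    obtain ⟨p, hp⟩ := poly_approx _ hec (δ / 2) (by positivity)
    obtain ⟨a', ha'⟩ := leg_span (p.natDegree + 1) p (by omega)
    have hap : ∑ n ∈ Finset.range (p.natDegree + 1), (a' n / rt n * rt n) • PC n = p := by
      conv_rhs => rw [ha']
      refine Finset.sum_congr rfl fun n _ => ?_
      have : (rt n : ℂ) ≠ 0 := by exact_mod_cast (hrtpos n).ne'
      rw [div_mul_cancel₀ _ this]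
    have hsmall : ‖e - embP p‖ ≤ δ := by
      have : e - embP p = _ := emb_sub _ _ hec (poly_cont p)
      rw [this]
      exact emb_small _ _ δ hδ.le hp
    refine ⟨p.natDegree + 1, fun n => a' n / rt n, ?_, ?_⟩
    · rw [hsv, hap]; exact hsmall
    · rw [hsc, hap]
      obtain ⟨G, W, h1, h2, h3⟩ := hpoly p
      have := hbound _ _ (hEW.sub h1)
      refine le_trans (le_of_eq ?_) (this.trans (mul_le_mul_of_nonneg_left ?_ hC0))
      · rw [← h3]
        congr 1
        simp
        ring
      · refine emb_small _ _ δ hδ.le fun s hs => ?_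
        rw [h2]
        have := hp s hs
        push_cast
        rwa [← mul_assoc]) N
  have hterm : ∀ n, c n * inner ℂ (v n) e = betaCoef f n x *
          ∫ s in (-1:ℝ)..1, (((legendreP n).eval s : ℝ) : ℂ) * Complex.exp (Complex.I * ω * x * s) := by
    intro n
    have h1 : inner ℂ (embP (PC n)) e = _ := emb_inner _ _ (poly_cont (PC n)) hec
    simp only [hPCeval, Complex.conj_ofReal] at h1
    simp only [hc, hv, inner_smul_left, Complex.conj_ofReal]
    rw [h1]
    have h2 : Lx f x (PC n) = (∑ k ∈ Finset.range (n + 1), ((legendreP n).coeff k : ℂ) * formalPower f k x / (x : ℂ) ^ k) - 1 := by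
      rw [Lx_apply f x (PC n) (n + 1)
        (Nat.lt_succ_of_le ((Polynomial.natDegree_map_le).trans (leg_natDegree_le n)))]
      congr 1
      · simp [hPC]
      · have := hPCeval n 1
        rw [leg_eval_one] at this
        simpa using this
    rw [betaCoef, ← h2]
    have h3 : (rt n : ℂ) * rt n = (2 * n + 1) / 2 := by
      rw [← Complex.ofReal_mul, hrt2]; push_cast; rfl
    rw [← h3]; ring
  simp only [hterm, hen] at key
  rw [← sub_sub]
  refine key.trans (le_of_eq ?_)
  rw [Real.sqrt_mul (by norm_num)]
  have := (Real.sqrt_pos.2 hx0).ne'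
  field_simp

/-- ω-independent error bound for the truncated NSBF representation, ω ∈ ℝ. -/
theorem NSBF_truncation_error_real_omega
    (b : ℝ) (hb : 0 < b) (q : ℝ → ℂ) (hq : ContinuousOn q (Set.Icc (-b) b))
    (f f' : ℝ → ℂ)
    (hf : ∀ x ∈ Set.Icc (-b) b, HasDerivAt f (f' x) x)
    (hf' : ∀ x ∈ Set.Icc (-b) b, HasDerivAt f' (q x * f x) x)
    (hf0 : f 0 = 1) (hf'0 : f' 0 = 0)
    (hfne : ∀ x ∈ Set.Icc (-b) b, f x ≠ 0) :
    ∃ ε : ℕ → ℝ → ℝ,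
      (∀ N : ℕ, ∀ x ∈ Set.Ioc (0:ℝ) b, 0 ≤ ε N x) ∧
      (∀ x ∈ Set.Ioc (0:ℝ) b, Tendsto (fun N : ℕ => ε N x) atTop (𝓝 0)) ∧
      ∀ (ω : ℝ) (y y' : ℝ → ℂ),
        (∀ x ∈ Set.Icc (-b) b, HasDerivAt y (y' x) x) →
        (∀ x ∈ Set.Icc (-b) b, HasDerivAt y' (q x * y x - (ω : ℂ) ^ 2 * y x) x) →
        y 0 = 1 → y' 0 = Complex.I * ω →
        ∀ (N : ℕ), ∀ x ∈ Set.Ioc (0:ℝ) b,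
          ‖y x - (fun (w : ℂ) (N : ℕ) (x : ℝ) => Complex.exp (Complex.I * w * x) +
        ∑ n ∈ Finset.range N, betaCoef f n x *
          ∫ s in (-1:ℝ)..1, (((legendreP n).eval s : ℝ) : ℂ) * Complex.exp (Complex.I * w * x * s)) ω N x‖ ≤ ε N x * Real.sqrt (2 * x) := by
  choose! ε h1 h2 h3 using fixed_x b hb q hq f f' hf hf' hf0 hf'0 hfne
  refine ⟨fun N x => ε x N, fun N x hx => h1 x hx N, fun x hx => h2 x hx, ?_⟩
  intro ω y y' a1 a2 a3 a4 N x hx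
  exact h3 x hx ω y y' a1 a2 a3 a4 N

end
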